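/- Let ε, μ > 0 and g ∈ ℝ³ with |g|² < εμ. Then the linear map L : ℝ³×ℝ³ → ℝ³×ℝ³ defined by L(E, H) = (εE − H×g, μH + E×g) is bijective, and for any (w_E, w_H) ∈ ℝ³×ℝ³ the unique solution (E, H) of L(E,H) = (w_E, w_H) is given in closed form by E = (εμ − |g|²)⁻¹ (I − (εμ)⁻¹ g gᵀ)(μ w_E + w_H × g) and H = (εμ − |g|²)⁻¹ (I − (εμ)⁻¹ g gᵀ)(ε w_H − w_E × g), where g gᵀ is the rank-one matrix with entries gᵢgⱼ. -/

import Mathlib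

/-- Euclidean dot product on `ℝ³`. -/
def dot3 (u v : Fin 3 → ℝ) : ℝ := ∑ i, u i * v i

/-- Cross product on `ℝ³`. -/
def cross3 (u v : Fin 3 → ℝ) : Fin 3 → ℝ :=
  ![u 1 * v 2 - u 2 * v 1, u 2 * v 0 - u 0 * v 2, u 0 * v 1 - u 1 * v 0]

/-- The pointwise operator `L(E, H) = (εE − H×g, μH + E×g)` of the mapped tent
pitching scheme. -/
def tentOp (ε μ : ℝ) (g : Fin 3 → ℝ) (u : (Fin 3 → ℝ) × (Fin 3 → ℝ)) :
    (Fin 3 → ℝ) × (Fin 3 → ℝ) :=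
  (fun i => ε * u.1 i - cross3 u.2 g i, fun i => μ * u.2 i + cross3 u.1 g i)

/-- The projection matrix `I − (εμ)⁻¹ g gᵀ`. -/
noncomputable def projMat (ε μ : ℝ) (g : Fin 3 → ℝ) : Matrix (Fin 3) (Fin 3) ℝ :=
  1 - Matrix.of (fun i j => (ε * μ)⁻¹ * (g i * g j))

/-!
Put `L = L_{ε, μ, g}`. The double cross product formula `(x × g) × g = (x ⬝ g) g - (g ⬝ g) x` shows
that `L_{μ, ε, -g}` inverts `L` up to the matrix `M = (εμ - g ⬝ g) I + g gᵀ` acting on both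
components, in either order. Sherman–Morrison gives
`M⁻¹ = (εμ - g ⬝ g)⁻¹ (I - (εμ)⁻¹ g gᵀ)`, so `L⁻¹ = (M⁻¹ ⊕ M⁻¹) L_{μ, ε, -g}`.
-/

open Matrix

section RankOne

variable {n K : Type*} [Fintype n] [DecidableEq n] [Field K] {a : K}

theorem smul_one_add_vecMulVec_mul_one_sub (ha : a ≠ 0) (v : n → K) :
    ((a - v ⬝ᵥ v) • (1 : Matrix n n K) + vecMulVec v v) * (1 - a⁻¹ • vecMulVec v v) =
      (a - v ⬝ᵥ v) • 1 := by
  have vecMulVec_sq : vecMulVec v v * vecMulVec v v = (v ⬝ᵥ v) • vecMulVec v v := by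
    rw [vecMulVec_mul_vecMulVec, vecMulVec_smul]
  simp only [add_mul, mul_sub, mul_one, one_mul, smul_mul_assoc, mul_smul_comm, vecMulVec_sq]
  match_scalars <;> field_simp
  ring

theorem smul_one_add_vecMulVec_mulVec_eq_iff (ha : a ≠ 0) {v : n → K} (hv : v ⬝ᵥ v ≠ a)
    {x y : n → K} :
    ((a - v ⬝ᵥ v) • (1 : Matrix n n K) + vecMulVec v v) *ᵥ x = y ↔
      x = (a - v ⬝ᵥ v)⁻¹ • (1 - a⁻¹ • vecMulVec v v) *ᵥ y := by
  set M := (a - v ⬝ᵥ v) • (1 : Matrix n n K) + vecMulVec v v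
  set N := (a - v ⬝ᵥ v)⁻¹ • (1 - a⁻¹ • vecMulVec v v) with hN
  have right_inv : M * N = 1 := by
    rw [hN, mul_smul_comm, smul_one_add_vecMulVec_mul_one_sub ha,
      inv_smul_smul₀ (sub_ne_zero.2 hv.symm)]
  have left_inv : N * M = 1 := mul_eq_one_comm.1 right_inv
  rw [← smul_mulVec]
  constructor
  · rintro rfl
    rw [mulVec_mulVec, left_inv, one_mulVec]
  · rintro rfl
    rw [mulVec_mulVec, right_inv, one_mulVec]

end RankOne

theorem smul_add_cross_cross_eq_mulVec {R : Type*} [CommRing R] (a : R) (g x : Fin 3 → R) :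
    a • x + x ⨯₃ g ⨯₃ g = ((a - g ⬝ᵥ g) • (1 : Matrix (Fin 3) (Fin 3) R) + vecMulVec g g) *ᵥ x := by
  rw [cross_cross_eq_smul_sub_smul, add_mulVec, smul_mulVec, one_mulVec, vecMulVec_mulVec,
    op_smul_eq_smul, dotProduct_comm x g]
  module

theorem smul_add_cross_cross_eq_iff {K : Type*} [Field K] {a : K} (ha : a ≠ 0) {g : Fin 3 → K}
    (hg : g ⬝ᵥ g ≠ a) {x y : Fin 3 → K} :
    a • x + x ⨯₃ g ⨯₃ g = y ↔ x = (a - g ⬝ᵥ g)⁻¹ • (1 - a⁻¹ • vecMulVec g g) *ᵥ y := by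
  rw [smul_add_cross_cross_eq_mulVec, smul_one_add_vecMulVec_mulVec_eq_iff ha hg]

theorem smul_add_cross_cross_injective {K : Type*} [Field K] {a : K} (ha : a ≠ 0) {g : Fin 3 → K}
    (hg : g ⬝ᵥ g ≠ a) : Function.Injective fun x : Fin 3 → K => a • x + x ⨯₃ g ⨯₃ g :=
  fun _ _ h => ((smul_add_cross_cross_eq_iff ha hg).1 h).trans
    ((smul_add_cross_cross_eq_iff ha hg).1 rfl).symm

/-- The operator `(E, H) ↦ (εE - H × g, μH + E × g)` over an arbitrary commutative ring, as a linear
map; over `ℝ` its underlying function is `tentOp`. -/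
def tentMap {R : Type*} [CommRing R] (ε μ : R) (g : Fin 3 → R) :
    (Fin 3 → R) × (Fin 3 → R) →ₗ[R] (Fin 3 → R) × (Fin 3 → R) :=
  (ε • .fst R _ _ - crossProduct.flip g ∘ₗ .snd R _ _).prod
    (μ • .snd R _ _ + crossProduct.flip g ∘ₗ .fst R _ _)

section CommRing

variable {R : Type*} [CommRing R] (ε μ : R) (g : Fin 3 → R)

theorem tentMap_apply (E H : Fin 3 → R) :
    tentMap ε μ g (E, H) = (ε • E - H ⨯₃ g, μ • H + E ⨯₃ g) :=
  rfl

theorem tentMap_swap_neg_apply (E H : Fin 3 → R) :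
    tentMap μ ε (-g) (E, H) = (μ • E + H ⨯₃ g, ε • H - E ⨯₃ g) := by
  simp only [tentMap_apply, map_neg, sub_neg_eq_add, ← sub_eq_add_neg]

theorem tentMap_swap_neg_tentMap (E H : Fin 3 → R) :
    tentMap μ ε (-g) (tentMap ε μ g (E, H)) =
      ((ε * μ) • E + E ⨯₃ g ⨯₃ g, (ε * μ) • H + H ⨯₃ g ⨯₃ g) := by
  simp only [tentMap_apply ε, tentMap_swap_neg_apply, map_add, map_sub, map_smul,
    LinearMap.add_apply, LinearMap.sub_apply, LinearMap.smul_apply]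
  ext1 <;> module

end CommRing

section Field

variable {K : Type*} [Field K] {ε μ : K} {g : Fin 3 → K}

theorem tentMap_injective (hεμ : ε * μ ≠ 0) (hg : g ⬝ᵥ g ≠ ε * μ) :
    Function.Injective (tentMap ε μ g) := by
  rintro ⟨E, H⟩ ⟨E', H'⟩ h
  have h' := congrArg (tentMap μ ε (-g)) h
  simp only [tentMap_swap_neg_tentMap, Prod.mk.injEq] at h'
  exact Prod.ext (smul_add_cross_cross_injective hεμ hg h'.1)
    (smul_add_cross_cross_injective hεμ hg h'.2)

theorem tentMap_eq_iff (hεμ : ε * μ ≠ 0) (hg : g ⬝ᵥ g ≠ ε * μ) {E H wE wH : Fin 3 → K} :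
    tentMap ε μ g (E, H) = (wE, wH) ↔
      E = (ε * μ - g ⬝ᵥ g)⁻¹ • (1 - (ε * μ)⁻¹ • vecMulVec g g) *ᵥ (μ • wE + wH ⨯₃ g) ∧
      H = (ε * μ - g ⬝ᵥ g)⁻¹ • (1 - (ε * μ)⁻¹ • vecMulVec g g) *ᵥ (ε • wH - wE ⨯₃ g) := by
  have swap_neg_injective : Function.Injective (tentMap μ ε (-g)) :=
    tentMap_injective (by rwa [mul_comm]) (by rwa [neg_dotProduct_neg, mul_comm])
  rw [← swap_neg_injective.eq_iff, tentMap_swap_neg_tentMap, tentMap_swap_neg_apply,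
    Prod.mk.injEq, smul_add_cross_cross_eq_iff hεμ hg, smul_add_cross_cross_eq_iff hεμ hg]

theorem tentOp_bijective_and_closed_form_inverse_general (hεμ : ε * μ ≠ 0)
    (hg : g ⬝ᵥ g ≠ ε * μ) :
    Function.Bijective (tentMap ε μ g) ∧
    ∀ wE wH E H : Fin 3 → K,
      tentMap ε μ g (E, H) = (wE, wH) ↔
        E = (ε * μ - g ⬝ᵥ g)⁻¹ • (1 - (ε * μ)⁻¹ • vecMulVec g g) *ᵥ (μ • wE + wH ⨯₃ g) ∧
        H = (ε * μ - g ⬝ᵥ g)⁻¹ • (1 - (ε * μ)⁻¹ • vecMulVec g g) *ᵥ (ε • wH - wE ⨯₃ g) :=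
  ⟨⟨tentMap_injective hεμ hg, fun _ => ⟨(_, _), (tentMap_eq_iff hεμ hg).2 ⟨rfl, rfl⟩⟩⟩,
    fun _ _ _ _ => tentMap_eq_iff hεμ hg⟩

end Field

/-- Under the strict causality condition `|g|² < εμ`, the operator
`L(E, H) = (εE − H×g, μH + E×g)` is bijective, and its inverse is given in closed form:
`L(E,H) = (w_E, w_H)` iff
`E = (εμ − |g|²)⁻¹ (I − (εμ)⁻¹ g gᵀ)(μ w_E + w_H × g)` and
`H = (εμ − |g|²)⁻¹ (I − (εμ)⁻¹ g gᵀ)(ε w_H − w_E × g)`. -/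
theorem tentOp_bijective_and_closed_form_inverse (ε μ : ℝ) (hε : 0 < ε) (hμ : 0 < μ)
    (g : Fin 3 → ℝ) (hg : dot3 g g < ε * μ) :
    Function.Bijective (tentOp ε μ g) ∧
    ∀ (wE wH E H : Fin 3 → ℝ),
      tentOp ε μ g (E, H) = (wE, wH) ↔
        (E = (ε * μ - dot3 g g)⁻¹ •
              (projMat ε μ g).mulVec (fun j => μ * wE j + cross3 wH g j) ∧
         H = (ε * μ - dot3 g g)⁻¹ •
              (projMat ε μ g).mulVec (fun j => ε * wH j - cross3 wE g j)) :=
  -- The coordinate formulas unfold to `tentMap`, `⨯₃`, `⬝ᵥ` and `vecMulVec` definitionally.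
  tentOp_bijective_and_closed_form_inverse_general (mul_pos hε hμ).ne' hg.ne
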